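/- Let q = p^h with p prime. In the generalised quadrangle Q^-(5,q) (of order (q,q^2)), let P1 and P2 be two non-collinear points and let Q be the set of points collinear with both (an elliptic quadric Q^-(3,q) of size q^2+1). Define a vector c over F_p giving symbol alpha to the points collinear with P1 and some point of Q, other than P1 and the points of Q, symbol -alpha to the analogous points for P2, and 0 elsewhere. Then c is a codeword of the dual code of points and lines of Q^-(5,q), and its weight is 2(q^2+1)(q-1)+2. -/

import Mathlib

/-!
The cone `P₁Q` is the set of all points collinear with `P₁`, because every line through `P₁` has a
point collinear with `P₂` (`cone_eq`). Hence `c` is `α` times the indicator of the points collinear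
with `P₁` minus `α` times the indicator of the points collinear with `P₂`; the two terms cancel
exactly on `Q`.

Collinearity is orthogonality for the polar form (`collinear_iff`), so the points of a line `L`
collinear with a fixed point are the points of a nonzero subspace of `L`, and their number is `1`
or `q + 1`, in both cases `1` modulo `p` (`card_line_perp`). The sum of `c` over `L` is therefore
`α - α = 0`.

For the weight, choose a hyperbolic pair `u, v` spanning `P₁, P₂`. The points collinear with `P₁`
but not with `P₂` are the spans of `u + w`, where `w` runs over the singular vectors orthogonal to
`u` and `v` (`card_perp_points`). Splitting off a hyperbolic plane changes the number of singular
vectors in a known way (`card_hyperbolic_sum`); computing the total for the explicit form and then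
removing the plane of `u, v` gives `q³ - q² + q` such `w` (`card_perp`), and the weight is twice
this number.
-/

open scoped Classical

noncomputable section

variable (F : Type*) [Field F] [Fintype F]

/-- An elliptic quadratic form `x₀x₁ + x₂x₃ + (x₄² + a·x₄x₅ + b·x₅²)` on `F^6`
(with `X² + aX + b` irreducible over `F`), defining `Q⁻(5,q)`. -/
def QelForm (a b : F) : (Fin 6 → F) → F := fun v =>
  v 0 * v 1 + v 2 * v 3 + (v 4 ^ 2 + a * (v 4 * v 5) + b * v 5 ^ 2)

/-- Points of the elliptic quadric `Q⁻(5,q)`. -/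
def QelPoint (a b : F) := {W : Submodule F (Fin 6 → F) //
  Module.finrank F W = 1 ∧ ∀ v ∈ W, QelForm F a b v = 0}

/-- Lines of the elliptic quadric `Q⁻(5,q)`: totally singular 2-dimensional subspaces. -/
def QelLine (a b : F) := {W : Submodule F (Fin 6 → F) //
  Module.finrank F W = 2 ∧ ∀ v ∈ W, QelForm F a b v = 0}

/-- Collinearity of two points of `Q⁻(5,q)`: they lie on a common line of the quadric. -/
def QelCollinear (a b : F) (X Y : QelPoint F a b) : Prop :=
  ∃ L : QelLine F a b, X.1 ≤ L.1 ∧ Y.1 ≤ L.1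

section
set_option linter.unusedSectionVars false
variable {F}

/-! ### The polar form and hyperbolic pairs -/

/-- The polar form `Q(x + y) - Q(x) - Q(y)` of `QelForm`, given by its coordinate expression so
that bilinearity is definitional in every characteristic. -/
def QelB (a b : F) : (Fin 6 → F) →ₗ[F] (Fin 6 → F) →ₗ[F] F :=
  LinearMap.mk₂ F (fun x y => x 0 * y 1 + x 1 * y 0 + (x 2 * y 3 + x 3 * y 2) +
      (2 * (x 4 * y 4) + a * (x 4 * y 5 + x 5 * y 4) + 2 * b * (x 5 * y 5)))
    (fun _ _ _ => by simp only [Pi.add_apply]; ring)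
    (fun _ _ _ => by simp only [Pi.smul_apply, smul_eq_mul]; ring)
    (fun _ _ _ => by simp only [Pi.add_apply]; ring)
    (fun _ _ _ => by simp only [Pi.smul_apply, smul_eq_mul]; ring)

lemma QelB_apply (a b : F) (x y : Fin 6 → F) :
    QelB a b x y = x 0 * y 1 + x 1 * y 0 + (x 2 * y 3 + x 3 * y 2) +
      (2 * (x 4 * y 4) + a * (x 4 * y 5 + x 5 * y 4) + 2 * b * (x 5 * y 5)) := rfl

lemma QelB_comm (a b : F) (x y : Fin 6 → F) : QelB a b x y = QelB a b y x := by
  simp only [QelB_apply]; ring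

lemma QelB_self (a b : F) (x : Fin 6 → F) : QelB a b x x = 2 * QelForm F a b x := by
  simp only [QelB_apply, QelForm]; ring

lemma QelForm_add (a b : F) (x y : Fin 6 → F) :
    QelForm F a b (x + y) = QelForm F a b x + QelForm F a b y + QelB a b x y := by
  simp only [QelB_apply, QelForm, Pi.add_apply]; ring

lemma QelForm_smul (a b : F) (s : F) (x : Fin 6 → F) :
    QelForm F a b (s • x) = s ^ 2 * QelForm F a b x := by
  simp only [QelForm, Pi.smul_apply, smul_eq_mul]; ring

lemma norm_anisotropic {a b : F} (hirr : ∀ x : F, x ^ 2 + a * x + b ≠ 0) (x y : F)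
    (h : x ^ 2 + a * (x * y) + b * y ^ 2 = 0) : x = 0 ∧ y = 0 := by
  have hy : y = 0 := by
    by_contra hy
    apply hirr (x / y)
    field_simp
    linear_combination h
  subst hy
  simpa using h

/-- A nonzero singular vector is the first half of a hyperbolic pair. Its first four coordinates
cannot all vanish because the binary form in the last two is anisotropic, so the partner can be a
multiple of one of the first four basis vectors; in characteristic 2 this does not need the polar
form to be nondegenerate. -/
lemma exists_hyperbolic {a b : F} (hirr : ∀ x : F, x ^ 2 + a * x + b ≠ 0)
    {u : Fin 6 → F} (hu : u ≠ 0) (hQ : QelForm F a b u = 0) :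
    ∃ v, QelForm F a b v = 0 ∧ QelB a b u v = 1 := by
  by_cases h0 : u 0 = 0
  · by_cases h1 : u 1 = 0
    · by_cases h2 : u 2 = 0
      · by_cases h3 : u 3 = 0
        · exfalso
          have h := norm_anisotropic hirr (u 4) (u 5) (by simpa [QelForm, h0, h2] using hQ)
          apply hu
          ext i
          fin_cases i <;> simp [*]
        · exact ⟨Pi.single 2 (u 3)⁻¹, by simp [QelForm], by simp [QelB_apply, h3]⟩
      · exact ⟨Pi.single 3 (u 2)⁻¹, by simp [QelForm], by simp [QelB_apply, h2]⟩
    · exact ⟨Pi.single 0 (u 1)⁻¹, by simp [QelForm], by simp [QelB_apply, h1]⟩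
  · exact ⟨Pi.single 1 (u 0)⁻¹, by simp [QelForm], by simp [QelB_apply, h0]⟩

/-! ### Counting singular vectors -/

/-- Adding a hyperbolic plane `s * t` to any function `g` on a finite set `W` turns `Z` zeros into
`q Z + (q - 1) |W|` zeros: for `s = 0` the value of `t` is free and `g w = 0`, while for `s ≠ 0`
the pair `(s, w)` is free and determines `t`. -/
lemma card_hyperbolic_sum {W : Type*} [Fintype W] (g : W → F) :
    Fintype.card {x : F × F × W // x.1 * x.2.1 + g x.2.2 = 0} + Fintype.card W =
      Fintype.card F * Fintype.card {w // g w = 0} + Fintype.card F * Fintype.card W := by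
  have e0 : {x : {x : F × F × W // x.1 * x.2.1 + g x.2.2 = 0} // x.1.1 = 0} ≃
      F × {w // g w = 0} :=
    { toFun := fun x => (x.1.1.2.1, ⟨x.1.1.2.2, by have := x.1.2; rw [x.2] at this; simpa using this⟩)
      invFun := fun y => ⟨⟨(0, y.1, y.2.1), by simp [y.2.2]⟩, rfl⟩
      left_inv := by rintro ⟨⟨⟨s, t, w⟩, h⟩, h'⟩; simp at h'; simp [h']
      right_inv := by rintro ⟨t, w, h⟩; rfl }
  have e1 : {x : {x : F × F × W // x.1 * x.2.1 + g x.2.2 = 0} // ¬ x.1.1 = 0} ≃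
      {s : F // ¬ s = 0} × W :=
    { toFun := fun x => (⟨x.1.1.1, x.2⟩, x.1.1.2.2)
      invFun := fun y => ⟨⟨(y.1.1, - g y.2 / y.1.1, y.2), by
        have := y.1.2
        field_simp
        ring⟩, y.1.2⟩
      left_inv := by
        rintro ⟨⟨⟨s, t, w⟩, h⟩, h'⟩
        simp only [Subtype.mk.injEq, Prod.mk.injEq, true_and, and_true] at h h' ⊢
        field_simp
        linear_combination -h
      right_inv := by rintro ⟨⟨s, hs⟩, w⟩; rfl }
  have hF : Fintype.card {s : F // ¬ s = 0} + 1 = Fintype.card F := by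
    have := Fintype.card_subtype_compl (fun s : F => s = 0)
    have h1 : 0 < Fintype.card F := Fintype.card_pos
    simp only [Fintype.card_subtype_eq] at this
    omega
  have hs := Fintype.card_congr (Equiv.sumCompl
    (fun x : {x : F × F × W // x.1 * x.2.1 + g x.2.2 = 0} => x.1.1 = 0))
  rw [Fintype.card_sum, Fintype.card_congr e0, Fintype.card_congr e1, Fintype.card_prod,
    Fintype.card_prod] at hs
  have hm : Fintype.card F * Fintype.card W =
      (Fintype.card {s : F // ¬ s = 0} + 1) * Fintype.card W := by rw [hF]
  rw [← hs, hm]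
  ring

/-- Six coordinates as a nested tuple, with the two hyperbolic planes split off first. -/
def coordEquiv : (Fin 6 → F) ≃ F × F × F × F × F × F where
  toFun v := (v 0, v 1, v 2, v 3, v 4, v 5)
  invFun x := ![x.1, x.2.1, x.2.2.1, x.2.2.2.1, x.2.2.2.2.1, x.2.2.2.2.2]
  left_inv v := by ext i; fin_cases i <;> rfl
  right_inv _ := rfl

/-- The quadric has `q⁵ - q³ + q²` singular vectors, zero included. -/
lemma card_singular {a b : F} (hirr : ∀ x : F, x ^ 2 + a * x + b ≠ 0) :
    Fintype.card {v // QelForm F a b v = 0} + Fintype.card F ^ 3 =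
      Fintype.card F ^ 5 + Fintype.card F ^ 2 := by
  have h2 : Fintype.card {x : F × F // x.1 ^ 2 + a * (x.1 * x.2) + b * x.2 ^ 2 = 0} = 1 := by
    rw [Fintype.card_eq_one_iff]
    refine ⟨⟨(0, 0), by simp⟩, ?_⟩
    rintro ⟨⟨x, y⟩, h⟩
    obtain ⟨rfl, rfl⟩ := norm_anisotropic hirr x y h
    rfl
  have h4 := card_hyperbolic_sum
    (fun x : F × F => x.1 ^ 2 + a * (x.1 * x.2) + b * x.2 ^ 2)
  have h6 := card_hyperbolic_sum
    (fun y : F × F × F × F => y.1 * y.2.1 +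
      (y.2.2.1 ^ 2 + a * (y.2.2.1 * y.2.2.2) + b * y.2.2.2 ^ 2))
  have e : {v // QelForm F a b v = 0} ≃ {x : F × F × F × F × F × F // x.1 * x.2.1 +
      (x.2.2.1 * x.2.2.2.1 + (x.2.2.2.2.1 ^ 2 + a * (x.2.2.2.2.1 * x.2.2.2.2.2) +
        b * x.2.2.2.2.2 ^ 2)) = 0} :=
    coordEquiv.subtypeEquiv (fun v => by rw [QelForm, add_assoc]; rfl)
  rw [Fintype.card_congr e]
  simp only [Fintype.card_prod, h2] at h4 h6
  zify at h4 h6 ⊢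
  linear_combination h6 + (Fintype.card F : ℤ) * h4

/-- The decomposition `x = s • u + t • v + w` with `w` orthogonal to a hyperbolic pair `u, v`. -/
def hypEquiv (a b : F) {u v : Fin 6 → F} (hu : QelForm F a b u = 0) (hv : QelForm F a b v = 0)
    (huv : QelB a b u v = 1) :
    (Fin 6 → F) ≃ F × F × {w // QelB a b u w = 0 ∧ QelB a b v w = 0} where
  toFun x := (QelB a b v x, QelB a b u x, ⟨x - QelB a b v x • u - QelB a b u x • v, by
    simp [QelB_self, hu, hv, huv, QelB_comm a b v u]⟩)
  invFun y := y.1 • u + y.2.1 • v + y.2.2.1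
  left_inv x := by simp
  right_inv := by
    rintro ⟨s, t, w, h1, h2⟩
    simp [QelB_self, hu, hv, huv, QelB_comm a b v u, h1, h2]
    module

/-- The orthogonal complement of a hyperbolic pair holds `q³ - q² + q = (q² + 1)(q - 1) + 1`
singular vectors. The number is found by solving the recursion of `card_hyperbolic_sum` backwards
from `card_singular`, which replaces an appeal to Witt cancellation. -/
lemma card_perp {a b : F} (hirr : ∀ x : F, x ^ 2 + a * x + b ≠ 0)
    {u v : Fin 6 → F} (hu : QelForm F a b u = 0) (hv : QelForm F a b v = 0)
    (huv : QelB a b u v = 1) :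
    Fintype.card {w : {w // QelB a b u w = 0 ∧ QelB a b v w = 0} // QelForm F a b w.1 = 0}
      + Fintype.card F ^ 2 = Fintype.card F ^ 3 + Fintype.card F := by
  have hq : 0 < Fintype.card F := Fintype.card_pos
  have hW := Fintype.card_congr (hypEquiv a b hu hv huv)
  have hs := card_singular hirr
  have h := card_hyperbolic_sum
    (fun w : {w // QelB a b u w = 0 ∧ QelB a b v w = 0} => QelForm F a b w.1)
  have e : {v // QelForm F a b v = 0} ≃
      {x : F × F × {w // QelB a b u w = 0 ∧ QelB a b v w = 0} //
        x.1 * x.2.1 + QelForm F a b x.2.2.1 = 0} :=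
    (hypEquiv a b hu hv huv).subtypeEquiv (fun x => by
      obtain ⟨y, rfl⟩ := (hypEquiv a b hu hv huv).symm.surjective x
      rw [Equiv.apply_symm_apply]
      obtain ⟨s, t, w, h1, h2⟩ := y
      simp [hypEquiv, QelForm_add, QelForm_smul, hu, hv, huv, h1, h2, mul_comm])
  rw [Fintype.card_congr e] at hs
  simp only [Fintype.card_prod, Fintype.card_fun, Fintype.card_fin] at hW
  have hW' : Fintype.card {w // QelB a b u w = 0 ∧ QelB a b v w = 0} = Fintype.card F ^ 4 := by
    apply Nat.eq_of_mul_eq_mul_left (pow_pos hq 2)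
    rw [← pow_add, hW]; ring
  rw [hW'] at h
  apply Nat.eq_of_mul_eq_mul_left hq
  zify at h hs ⊢
  linear_combination hs - h

lemma exists_perp {a b : F} (hirr : ∀ x : F, x ^ 2 + a * x + b ≠ 0)
    {u v : Fin 6 → F} (hu : QelForm F a b u = 0) (hv : QelForm F a b v = 0)
    (huv : QelB a b u v = 1) :
    ∃ w, w ≠ 0 ∧ QelB a b u w = 0 ∧ QelB a b v w = 0 ∧ QelForm F a b w = 0 := by
  have h := card_perp hirr hu hv huv
  have hq : 1 < Fintype.card F := Fintype.one_lt_card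
  have : 1 < Fintype.card
      {w : {w // QelB a b u w = 0 ∧ QelB a b v w = 0} // QelForm F a b w.1 = 0} := by
    nlinarith [Nat.zero_le ((Fintype.card F) ^ 2)]
  obtain ⟨⟨⟨w, h1, h2⟩, h3⟩, hw⟩ :=
    Fintype.exists_ne_of_one_lt_card this ⟨⟨0, by simp⟩, by simp [QelForm]⟩
  exact ⟨w, fun h => hw (by subst h; rfl), h1, h2, h3⟩

/-! ### Collinearity as orthogonality -/

lemma QelPoint.exists_rep {a b : F} (X : QelPoint F a b) :
    ∃ x, x ≠ 0 ∧ QelForm F a b x = 0 ∧ X.1 = F ∙ x := by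
  obtain ⟨x, hx, h⟩ := finrank_eq_one_iff'.1 X.2.1
  refine ⟨x, by simpa using hx, X.2.2 _ x.2, le_antisymm ?_ ?_⟩
  · intro y hy
    obtain ⟨c, hc⟩ := h ⟨y, hy⟩
    exact Submodule.mem_span_singleton.2 ⟨c, congrArg Subtype.val hc⟩
  · simp

/-- The point of the quadric spanned by a nonzero singular vector. -/
def QelPoint.mk' (a b : F) (x : Fin 6 → F) (hx : x ≠ 0) (h : QelForm F a b x = 0) :
    QelPoint F a b :=
  ⟨F ∙ x, finrank_span_singleton hx, fun v hv => by
    obtain ⟨c, rfl⟩ := Submodule.mem_span_singleton.1 hv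
    rw [QelForm_smul, h, mul_zero]⟩

lemma exists_line {a b : F} {x y : Fin 6 → F} (hx : QelForm F a b x = 0)
    (hy : QelForm F a b y = 0) (hxy : QelB a b x y = 0) (hli : LinearIndependent F ![x, y]) :
    ∃ L : QelLine F a b, x ∈ L.1 ∧ y ∈ L.1 := by
  refine ⟨⟨Submodule.span F {x, y}, ?_, ?_⟩, ?_, ?_⟩
  · have := finrank_span_eq_card hli
    rwa [Matrix.range_cons_cons_empty, Fintype.card_fin] at this
  · intro v hv
    obtain ⟨s, t, rfl⟩ := Submodule.mem_span_pair.1 hv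
    simp [QelForm_add, QelForm_smul, hx, hy, hxy]
  · exact Submodule.subset_span (by simp)
  · exact Submodule.subset_span (by simp)

/-- Collinearity is orthogonality. When the two points coincide this says that every point lies
on a line of the quadric, which is where `exists_perp` is needed. -/
lemma collinear_iff {a b : F} (hirr : ∀ x : F, x ^ 2 + a * x + b ≠ 0) {X Y : QelPoint F a b}
    {x y : Fin 6 → F} (hX : X.1 = F ∙ x) (hY : Y.1 = F ∙ y) :
    QelCollinear F a b X Y ↔ QelB a b x y = 0 := by
  have hx0 : x ≠ 0 := by rintro rfl; exact absurd X.2.1 (by rw [hX, Submodule.span_zero_singleton, finrank_bot]; exact zero_ne_one)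
  have hy0 : y ≠ 0 := by rintro rfl; exact absurd Y.2.1 (by rw [hY, Submodule.span_zero_singleton, finrank_bot]; exact zero_ne_one)
  have hx : QelForm F a b x = 0 := X.2.2 x (by rw [hX]; exact Submodule.mem_span_singleton_self x)
  have hy : QelForm F a b y = 0 := Y.2.2 y (by rw [hY]; exact Submodule.mem_span_singleton_self y)
  unfold QelCollinear
  simp only [hX, hY, Submodule.span_singleton_le_iff_mem]
  constructor
  · rintro ⟨L, h1, h2⟩
    have := L.2.2 _ (add_mem h1 h2)
    simpa [QelForm_add, hx, hy] using this
  · intro h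
    by_cases hli : LinearIndependent F ![x, y]
    · exact exists_line hx hy h hli
    · rw [LinearIndependent.pair_iff' hx0] at hli
      push Not at hli
      obtain ⟨t, rfl⟩ := hli
      obtain ⟨v, hv, hxv⟩ := exists_hyperbolic hirr hx0 hx
      obtain ⟨w, hw0, hxw, hvw, hw⟩ := exists_perp hirr hx hv hxv
      obtain ⟨L, h1, h2⟩ := exists_line hx hw hxw (by
        rw [LinearIndependent.pair_iff' hx0]
        rintro s rfl
        apply hw0
        simp [QelB_comm a b v x, hxv] at hvw
        simp [hvw])
      exact ⟨L, h1, L.1.smul_mem t h1⟩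

lemma collinear_comm {a b : F} {X Y : QelPoint F a b} :
    QelCollinear F a b X Y ↔ QelCollinear F a b Y X := by
  simp only [QelCollinear, and_comm]

/-- Every line contains a point orthogonal to a given vector. -/
lemma exists_mem_line_perp {a b : F} (L : QelLine F a b) (r : Fin 6 → F) :
    ∃ y ∈ L.1, y ≠ 0 ∧ QelB a b r y = 0 := by
  have h : LinearMap.ker ((QelB a b r).domRestrict L.1) ≠ ⊥ :=
    LinearMap.ker_ne_bot_of_finrank_lt (by rw [L.2.1, Module.finrank_self]; norm_num)
  obtain ⟨y, hy, hy0⟩ := Submodule.exists_mem_ne_zero_of_ne_bot h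
  exact ⟨y, y.2, by simpa using hy0, by simpa using hy⟩

/-- The cone with vertex `P` over the points collinear with `P` and `R` consists of all points
collinear with `P`: each line through `P` has a point collinear with `R`. -/
lemma cone_eq {a b : F} (hirr : ∀ x : F, x ^ 2 + a * x + b ≠ 0) (P R : QelPoint F a b) :
    {X : QelPoint F a b | ∃ Y ∈ {X | QelCollinear F a b X P ∧ QelCollinear F a b X R},
      ∃ L : QelLine F a b, P.1 ≤ L.1 ∧ Y.1 ≤ L.1 ∧ X.1 ≤ L.1} =
    {X | QelCollinear F a b X P} := by
  ext X
  constructor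
  · rintro ⟨Y, -, L, hP, -, hX⟩
    exact ⟨L, hX, hP⟩
  · rintro ⟨L, hX, hP⟩
    obtain ⟨r, -, -, hR⟩ := R.exists_rep
    obtain ⟨y, hyL, hy0, hy⟩ := exists_mem_line_perp L r
    have hYL : (QelPoint.mk' a b y hy0 (L.2.2 y hyL)).1 ≤ L.1 :=
      (Submodule.span_singleton_le_iff_mem _ _).2 hyL
    refine ⟨QelPoint.mk' a b y hy0 (L.2.2 y hyL), ⟨⟨L, hYL, hP⟩, ?_⟩, L, hP, hYL, hX⟩
    rw [collinear_iff hirr rfl hR, QelB_comm, hy]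

/-! ### Counting points -/

/-- A nonzero totally singular subspace of dimension `n` has `1 + q + ⋯ + q ^ (n - 1)` points,
which is `1` modulo `p`. -/
lemma card_points (p : ℕ) [CharP F p] {a b : F} (K : Submodule F (Fin 6 → F)) (hK : K ≠ ⊥)
    (hs : ∀ v ∈ K, QelForm F a b v = 0) :
    (({X : QelPoint F a b | X.1 ≤ K}.ncard : ℕ) : ZMod p) = 1 := by
  let f : {H : Submodule F K // Module.finrank F H = 1} → {X : QelPoint F a b | X.1 ≤ K} :=
    fun H => ⟨⟨H.1.map K.subtype, by rw [Submodule.finrank_map_subtype_eq, H.2],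
      fun v hv => hs v (Submodule.map_subtype_le K H.1 hv)⟩, Submodule.map_subtype_le K H.1⟩
  have hf : Function.Bijective f := by
    constructor
    · intro H H' h
      apply Subtype.ext
      apply Submodule.map_injective_of_injective K.injective_subtype
      exact congrArg (fun X => X.1.1) h
    · rintro ⟨X, hX⟩
      have hm : (X.1.comap K.subtype).map K.subtype = X.1 := by
        rw [Submodule.map_comap_subtype, inf_eq_right]
        exact hX
      refine ⟨⟨X.1.comap K.subtype, ?_⟩, Subtype.ext (Subtype.ext hm)⟩
      rw [← Submodule.finrank_map_subtype_eq, hm, X.2.1]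
  have hc := Nat.card_congr ((Projectivization.equivSubmodule F K).trans (Equiv.ofBijective f hf))
  rw [← Nat.card_coe_set_eq, ← hc, Projectivization.card_of_finrank F K rfl]
  obtain ⟨n, hn⟩ : ∃ n, Module.finrank F K = n + 1 :=
    Nat.exists_eq_succ_of_ne_zero (fun h => hK (Submodule.finrank_eq_zero.1 h))
  have hq : ((Fintype.card F : ℕ) : ZMod p) = 0 := by
    rw [ZMod.natCast_eq_zero_iff, ← CharP.cast_eq_zero_iff F p]
    exact FiniteField.cast_card_eq_zero F
  rw [hn, Nat.card_eq_fintype_card, Finset.sum_range_succ']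
  push_cast
  simp [hq]

/-- The points of a line collinear with a given point are those of a nonzero subspace of the line,
so their number is `1` modulo `p` whether or not the whole line is orthogonal to the point. -/
lemma card_line_perp (p : ℕ) [CharP F p] {a b : F} (hirr : ∀ x : F, x ^ 2 + a * x + b ≠ 0)
    (L : QelLine F a b) (P : QelPoint F a b) :
    (({X : QelPoint F a b | X.1 ≤ L.1 ∧ QelCollinear F a b X P}.ncard : ℕ) : ZMod p) = 1 := by
  obtain ⟨u, -, -, hP⟩ := P.exists_rep
  obtain ⟨y, hyL, hy0, hy⟩ := exists_mem_line_perp L u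
  rw [← card_points p (a := a) (b := b) (L.1 ⊓ LinearMap.ker (QelB a b u))
    ((Submodule.ne_bot_iff _).2 ⟨y, ⟨hyL, hy⟩, hy0⟩) (fun v hv => L.2.2 v hv.1)]
  congr 2
  ext X
  obtain ⟨x, -, -, hX⟩ := X.exists_rep
  simp only [Set.mem_ofPred_eq, collinear_iff hirr hX hP]
  simp [hX, Submodule.span_singleton_le_iff_mem, QelB_comm a b u x]

/-- If `u, v` is a hyperbolic pair spanning `P` and `R`, each point collinear with `P` but not with
`R` is spanned by `u + w` for a unique singular `w` orthogonal to `u` and `v`. -/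
lemma card_perp_points {a b : F} (hirr : ∀ x : F, x ^ 2 + a * x + b ≠ 0)
    {P R : QelPoint F a b} (h : ¬ QelCollinear F a b P R) :
    {X : QelPoint F a b | QelCollinear F a b X P ∧ ¬ QelCollinear F a b X R}.ncard =
      (Fintype.card F ^ 2 + 1) * (Fintype.card F - 1) + 1 := by
  obtain ⟨u, -, hu, hP⟩ := P.exists_rep
  obtain ⟨v₀, hv₀, hQ₀, hR₀⟩ := R.exists_rep
  rw [collinear_iff hirr hP hR₀] at h
  obtain ⟨v, hv, huv, hR⟩ : ∃ v, QelForm F a b v = 0 ∧ QelB a b u v = 1 ∧ R.1 = F ∙ v :=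
    ⟨(QelB a b u v₀)⁻¹ • v₀, by rw [QelForm_smul, hQ₀, mul_zero], by simp [h],
      by rw [hR₀, Submodule.span_singleton_smul_eq (IsUnit.mk0 _ (inv_ne_zero h))]⟩
  have hvu : QelB a b v u = 1 := by rw [QelB_comm, huv]
  have hBv (w : {w // QelB a b u w = 0 ∧ QelB a b v w = 0}) : QelB a b v (u + w.1) = 1 := by
    rw [map_add, hvu, w.2.2, add_zero]
  have hBu (w : {w // QelB a b u w = 0 ∧ QelB a b v w = 0}) : QelB a b u (u + w.1) = 0 := by
    rw [map_add, QelB_self, hu, w.2.1, mul_zero, add_zero]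
  let f : {w : {w // QelB a b u w = 0 ∧ QelB a b v w = 0} // QelForm F a b w.1 = 0} →
      {X : QelPoint F a b | QelCollinear F a b X P ∧ ¬ QelCollinear F a b X R} :=
    fun w => ⟨QelPoint.mk' a b (u + w.1.1)
      (fun h0 => by have := hBv w.1; rw [h0] at this; simp at this)
      (by rw [QelForm_add, hu, w.2, w.1.2.1]; simp), by
      rw [Set.mem_ofPred_eq, collinear_iff hirr rfl hP, collinear_iff hirr rfl hR,
        QelB_comm, hBu, QelB_comm, hBv]
      simp⟩
  have hf : Function.Bijective f := by
    constructor
    · intro w w' hw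
      have hw' : (F ∙ (u + w.1.1)) = F ∙ (u + w'.1.1) := congrArg (fun X => X.1.1) hw
      obtain ⟨t, ht⟩ := Submodule.mem_span_singleton.1
        (hw' ▸ Submodule.mem_span_singleton_self (u + w.1.1))
      have h1 := congrArg (QelB a b v) ht
      rw [map_smul, hBv, hBv, smul_eq_mul, mul_one] at h1
      rw [h1, one_smul] at ht
      exact Subtype.ext (Subtype.ext (add_left_cancel ht).symm)
    · rintro ⟨X, hXP, hXR⟩
      obtain ⟨x, -, hx, hX⟩ := X.exists_rep
      rw [collinear_iff hirr hX hP, QelB_comm] at hXP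
      rw [collinear_iff hirr hX hR, QelB_comm] at hXR
      -- Rescaling `x` to have product `1` with `v` makes its `u`-component equal to `u`.
      refine ⟨⟨⟨(QelB a b v x)⁻¹ • x - u, ?_, ?_⟩, ?_⟩, ?_⟩
      · simp [hXP, QelB_self, hu]
      · simp [hXR, hvu]
      · change QelForm F a b ((QelB a b v x)⁻¹ • x - u) = 0
        rw [sub_eq_add_neg, ← neg_one_smul F u, QelForm_add, QelForm_smul, QelForm_smul]
        simp [hx, hu, QelB_comm a b x u, hXP]
      · apply Subtype.ext
        apply Subtype.ext
        change (F ∙ (u + ((QelB a b v x)⁻¹ • x - u))) = X.1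
        rw [add_sub_cancel, hX,
          Submodule.span_singleton_smul_eq (IsUnit.mk0 _ (inv_ne_zero hXR))]
  have hc := Nat.card_congr (Equiv.ofBijective f hf)
  rw [← Nat.card_coe_set_eq, ← hc, Nat.card_eq_fintype_card]
  have hW := card_perp hirr hu hv huv
  obtain ⟨m, hm⟩ := Nat.exists_eq_succ_of_ne_zero (Fintype.card_ne_zero (α := F))
  rw [hm] at hW ⊢
  simp only [Nat.succ_eq_add_one, Nat.add_sub_cancel] at hW ⊢
  apply Nat.add_right_cancel (m := (m + 1) ^ 2)
  rw [hW]
  ring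
end

/-! ### The codeword and its weight -/

/-- Let `P₁, P₂` be non-collinear points of `Q⁻(5,q)`, `Q` the set of points collinear
with both, and give symbol `α` to the points of the cone `P₁Q` minus `Q`, symbol `-α` to
those of `P₂Q` minus `Q`, and `0` elsewhere. The resulting vector is a codeword of the
dual code of points and lines of `Q⁻(5,q)`, of weight `2(q²+1)(q-1)+2`. -/
theorem Qminus5_cone_codeword (p q : ℕ) (hp : p.Prime) [CharP F p]
    (hq : Fintype.card F = q)
    (a b : F) (hirr : ∀ x : F, x ^ 2 + a * x + b ≠ 0)
    (P₁ P₂ : QelPoint F a b) (hnc : ¬ QelCollinear F a b P₁ P₂)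
    (Qset : Set (QelPoint F a b))
    (hQset : Qset = {X | QelCollinear F a b X P₁ ∧ QelCollinear F a b X P₂})
    (cone₁ cone₂ : Set (QelPoint F a b))
    (hcone₁ : cone₁ = {X | ∃ Y ∈ Qset, ∃ L : QelLine F a b,
      P₁.1 ≤ L.1 ∧ Y.1 ≤ L.1 ∧ X.1 ≤ L.1})
    (hcone₂ : cone₂ = {X | ∃ Y ∈ Qset, ∃ L : QelLine F a b,
      P₂.1 ≤ L.1 ∧ Y.1 ≤ L.1 ∧ X.1 ≤ L.1})
    (α : ZMod p) (hα : α ≠ 0)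
    (c : QelPoint F a b → ZMod p)
    (hc : ∀ X, c X = if X ∈ cone₁ \ Qset then α
      else if X ∈ cone₂ \ Qset then -α else 0) :
    (∀ L : QelLine F a b, ∑ᶠ X ∈ {X : QelPoint F a b | X.1 ≤ L.1}, c X = 0) ∧
    Set.ncard {X : QelPoint F a b | c X ≠ 0} = 2 * (q ^ 2 + 1) * (q - 1) + 2 := by
  have hcone₁' : cone₁ = {X | QelCollinear F a b X P₁} := by
    rw [hcone₁, hQset, cone_eq hirr]
  have hcone₂' : cone₂ = {X | QelCollinear F a b X P₂} := by
    rw [hcone₂, hQset, ← cone_eq hirr P₂ P₁]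
    simp only [and_comm]
  have hc₁ (X) : c X = if QelCollinear F a b X P₁ ∧ ¬ QelCollinear F a b X P₂ then α
      else if QelCollinear F a b X P₂ ∧ ¬ QelCollinear F a b X P₁ then -α else 0 := by
    rw [hc, hcone₁', hcone₂', hQset]
    simp only [Set.mem_sdiff, Set.mem_ofPred_eq]
    grind
  have hfin : Finite (QelPoint F a b) := Subtype.finite
  constructor
  · intro L
    -- A point collinear with both vertices contributes `α - α = 0`, so `c` is a difference of
    -- multiples of two indicator functions.
    have hc₂ (X) : c X = α * (if QelCollinear F a b X P₁ then 1 else 0) -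
        α * (if QelCollinear F a b X P₂ then 1 else 0) := by
      rw [hc₁]
      by_cases h₁ : QelCollinear F a b X P₁ <;> by_cases h₂ : QelCollinear F a b X P₂ <;>
        simp [h₁, h₂]
    have := Fintype.ofFinite (QelPoint F a b)
    have key (P : QelPoint F a b) : ∑ X : QelPoint F a b with X.1 ≤ L.1,
        (if QelCollinear F a b X P then (1 : ZMod p) else 0) = 1 := by
      rw [Finset.sum_boole, Finset.filter_filter, ← card_line_perp p hirr L P,
        Set.ncard_eq_toFinset_card']
      congr 2
      ext X
      simp
    rw [finsum_mem_eq_sum_of_inter_support_eq (t := {X | X.1 ≤ L.1}) _ (by simp)]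
    simp only [hc₂, Finset.sum_sub_distrib, ← Finset.mul_sum, key, sub_self]
  · have hset : {X : QelPoint F a b | c X ≠ 0} =
        {X | QelCollinear F a b X P₁ ∧ ¬ QelCollinear F a b X P₂} ∪
        {X | QelCollinear F a b X P₂ ∧ ¬ QelCollinear F a b X P₁} := by
      ext X
      simp only [Set.mem_ofPred_eq, Set.mem_union, hc₁]
      by_cases h₁ : QelCollinear F a b X P₁ <;> by_cases h₂ : QelCollinear F a b X P₂ <;>
        simp [h₁, h₂, hα]
    rw [hset, Set.ncard_union_eq, card_perp_points hirr hnc,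
      card_perp_points hirr (fun h => hnc (collinear_comm.1 h)), hq]
    · ring
    · rw [Set.disjoint_left]
      rintro X ⟨-, h⟩ ⟨h', -⟩
      exact h h'
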